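/- Let σ be drawn from the weighted Curie–Weiss Gibbs measure and let (σ,σ') be the exchangeable pair obtained by resampling the spins at a uniformly chosen edge. Then E[(M − M')² | σ] = L₂(m(σ)) + R₂(m(σ)), where R₂ is a function on [0,1] satisfying |R₂(m)| ≤ K/N for all m ∈ [0,1], for a constant K depending only on (J,h) and not on N. -/

import Mathlib

open Real Finset MeasureTheory

noncomputable section

/-- Dimer configurations (matchings of the complete graph on `Fin N`), encoded as
involutions of `Fin N`: fixed points are monomers, 2-cycles are dimers. -/
abbrev Dimer (N : ℕ) := {f : Fin N → Fin N // ∀ i, f (f i) = i}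

/-- The set of monomers (dimer-free vertices) of a dimer configuration. -/
def monomers {N : ℕ} (D : Dimer N) : Finset (Fin N) :=
  Finset.univ.filter fun i => D.1 i = i

/-- Monomer density `m(D) = |𝓜(D)|/N`. -/
def mDim {N : ℕ} (D : Dimer N) : ℝ := ((monomers D).card : ℝ) / N

/-- The parameter `b = (log N)/2 + h - J`. -/
def bIMD (N : ℕ) (J h : ℝ) : ℝ := Real.log N / 2 + h - J

/-- The Gibbs weight `exp(-H(D)) = exp(N (a m(D)^2 + b m(D)))` with `a = J`. -/
def wDim (N : ℕ) (J h : ℝ) (D : Dimer N) : ℝ :=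
  Real.exp (N * (J * mDim D ^ 2 + bIMD N J h * mDim D))

/-- The probability of an event `A` under the IMD Gibbs measure. -/
def probDim (N : ℕ) (J h : ℝ) (A : Dimer N → Prop) : ℝ :=
  (∑ D : Dimer N, Set.indicator {D | A D} (wDim N J h) D) / ∑ D : Dimer N, wDim N J h D

/-- The conditional probability `ℙ(A | B)` under the IMD Gibbs measure. -/
def condProbDim (N : ℕ) (J h : ℝ) (A B : Dimer N → Prop) : ℝ :=
  (∑ D : Dimer N, Set.indicator {D | A D ∧ B D} (wDim N J h) D) /
    ∑ D : Dimer N, Set.indicator {D | B D} (wDim N J h) D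

/-- `g(x) = (√(e^{4x} + 4 e^{2x}) - e^{2x})/2`. -/
def gFun (x : ℝ) : ℝ := (Real.sqrt (Real.exp (4*x) + 4 * Real.exp (2*x)) - Real.exp (2*x)) / 2

/-- `τ(x) = (2x-1)J + h`. -/
def tauFun (J h x : ℝ) : ℝ := (2*x - 1) * J + h

/-- `𝑝̃(m) = -J m² - (1 - g(τ(m)) + log(1 - g(τ(m))))/2`. -/
def ptilde (J h m : ℝ) : ℝ :=
  -J * m^2 - (1 - gFun (tauFun J h m) + Real.log (1 - gFun (tauFun J h m))) / 2

/-- The CDF of a centered Gaussian with variance `v`, evaluated at `z`. -/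
def gaussCDF (v : ℝ) (z : ℝ) : ℝ :=
  (ProbabilityTheory.gaussianReal 0 (Real.toNNReal v) (Set.Iic z)).toReal

/-- Spin configurations `Σ = {0,1}^N`. -/
abbrev Config (N : ℕ) := Fin N → Bool

/-- `𝓐(σ) = {i : σ_i = 1}`. -/
def ASet {N : ℕ} (σ : Config N) : Finset (Fin N) := Finset.univ.filter fun i => σ i = true

/-- `M(σ) = ∑ σ_i`. -/
def Msum {N : ℕ} (σ : Config N) : ℕ := (ASet σ).card

/-- Magnetization `m(σ) = M(σ)/N`. -/
def mConf {N : ℕ} (σ : Config N) : ℝ := (Msum σ : ℝ) / N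

/-- `D(σ)`: the number of dimer configurations `D` with `𝓜(D) = 𝓐(σ)`. -/
def Dcount (N : ℕ) (σ : Config N) : ℕ :=
  (Finset.univ.filter fun D : Dimer N => monomers D = ASet σ).card

/-- The weight `D(σ) exp(-H(σ))` of the weighted Curie–Weiss model. -/
def wConf (N : ℕ) (J h : ℝ) (σ : Config N) : ℝ :=
  (Dcount N σ : ℝ) * Real.exp (N * (J * mConf σ ^ 2 + bIMD N J h * mConf σ))

/-- The probability of an event `A` under the weighted Curie–Weiss Gibbs measure. -/
def probConf (N : ℕ) (J h : ℝ) (A : Config N → Prop) : ℝ :=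
  (∑ σ : Config N, Set.indicator {σ | A σ} (wConf N J h) σ) / ∑ σ : Config N, wConf N J h σ

/-- Expectation under the weighted Curie–Weiss Gibbs measure. -/
def EConf (N : ℕ) (J h : ℝ) (f : Config N → ℝ) : ℝ :=
  (∑ σ : Config N, wConf N J h σ * f σ) / ∑ σ : Config N, wConf N J h σ

/-- `L₁(m) = 2(1-m)(m² - (1-m)e^{2τ(m)})/((1-m) + e^{2τ(m)})`. -/
def Lone (J h m : ℝ) : ℝ :=
  2*(1-m)*(m^2 - (1-m)*Real.exp (2 * tauFun J h m)) / ((1-m) + Real.exp (2 * tauFun J h m))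

/-- `L₂(m) = 4(1-m)(m² + (1-m)e^{2τ(m)})/((1-m) + e^{2τ(m)})`. -/
def Ltwo (J h m : ℝ) : ℝ :=
  4*(1-m)*(m^2 + (1-m)*Real.exp (2 * tauFun J h m)) / ((1-m) + Real.exp (2 * tauFun J h m))

/-- The configuration obtained from `σ` by setting the spins at `u, v` to `s, t`. -/
def upd {N : ℕ} (σ : Config N) (u v : Fin N) (s t : Bool) : Config N :=
  fun i => if i = u then s else if i = v then t else σ i

/-- The edges of the complete graph, enumerated as ordered pairs `u < v`. -/
def cEdges (N : ℕ) : Finset (Fin N × Fin N) := Finset.univ.filter fun p => p.1 < p.2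

/-- The probability of resampling the pair of spins at `(u,v)` to `(s,t)`:
the conditional distribution of `(σ_u, σ_v)` given `(σ_i)_{i ≠ u,v}`. -/
def qCond (N : ℕ) (J h : ℝ) (σ : Config N) (u v : Fin N) (s t : Bool) : ℝ :=
  wConf N J h (upd σ u v s t) / ∑ st : Bool × Bool, wConf N J h (upd σ u v st.1 st.2)

/-- `E[F(σ, σ') | σ]` for the exchangeable pair `(σ, σ')` obtained by resampling the
spins at a uniformly chosen edge. -/
def condE2 (N : ℕ) (J h : ℝ) (F : Config N → Config N → ℝ) (σ : Config N) : ℝ :=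
  ((cEdges N).card : ℝ)⁻¹ * ∑ p ∈ cEdges N, ∑ st : Bool × Bool,
    qCond N J h σ p.1 p.2 st.1 st.2 * F σ (upd σ p.1 p.2 st.1 st.2)

/-- The weight of the Gibbs measure conditioned on the event `S`. -/
def wCond (N : ℕ) (J h : ℝ) (S : Config N → Prop) (σ : Config N) : ℝ :=
  Set.indicator {σ | S σ} (wConf N J h) σ

/-- `ℙ_ℓ(A) = ℙ(A | S)`, probability under the conditioned Gibbs measure. -/
def probL (N : ℕ) (J h : ℝ) (S A : Config N → Prop) : ℝ :=
  (∑ σ : Config N, Set.indicator {σ | A σ} (wCond N J h S) σ) / ∑ σ : Config N, wCond N J h S σ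

/-- Expectation under the conditioned Gibbs measure `ℙ(·|S)`. -/
def EL (N : ℕ) (J h : ℝ) (S : Config N → Prop) (f : Config N → ℝ) : ℝ :=
  (∑ σ : Config N, wCond N J h S σ * f σ) / ∑ σ : Config N, wCond N J h S σ

/-- Resampling probability for the conditioned measure `ℙ(·|S)`. -/
def qCondL (N : ℕ) (J h : ℝ) (S : Config N → Prop) (σ : Config N) (u v : Fin N)
    (s t : Bool) : ℝ :=
  wCond N J h S (upd σ u v s t) / ∑ st : Bool × Bool, wCond N J h S (upd σ u v st.1 st.2)

/-- `E_ℓ[F(σ, σ') | σ]` for the exchangeable pair under the conditioned measure. -/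
def condE2L (N : ℕ) (J h : ℝ) (S : Config N → Prop) (F : Config N → Config N → ℝ)
    (σ : Config N) : ℝ :=
  ((cEdges N).card : ℝ)⁻¹ * ∑ p ∈ cEdges N, ∑ st : Bool × Bool,
    qCondL N J h S σ p.1 p.2 st.1 st.2 * F σ (upd σ p.1 p.2 st.1 st.2)

/-- The maximizer set `O` of `𝑝̃` on `[0,1]`. -/
def maxSet (J h : ℝ) : Set ℝ :=
  {x | x ∈ Set.Icc (0:ℝ) 1 ∧ ∀ y ∈ Set.Icc (0:ℝ) 1, ptilde J h y ≤ ptilde J h x}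

end

section Counting

/-- The number of perfect matchings of the complete graph on `n` vertices. -/
def matchingCount : ℕ → ℕ
  | 0 => 1
  | 1 => 0
  | n + 2 => (n + 1) * matchingCount n

theorem matchingCount_pos_of_even {n : ℕ} (hn : Even n) : 0 < matchingCount n := by
  induction n using Nat.twoStepInduction with
  | zero => simp [matchingCount]
  | one => simp at hn
  | more n ih _ =>
    have : Even n := by simpa [Nat.even_add] using hn
    exact Nat.mul_pos n.succ_pos (ih this)

theorem matchingCount_eq_zero_of_odd {n : ℕ} (hn : Odd n) : matchingCount n = 0 := by
  induction n using Nat.twoStepInduction with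
  | zero => simp at hn
  | one => rfl
  | more n ih _ =>
    have : Odd n := by simpa [Nat.odd_add] using hn
    simp [matchingCount, ih this]

theorem mem_monomers {N : ℕ} {D : Dimer N} {i : Fin N} : i ∈ monomers D ↔ D.1 i = i := by
  simp [monomers]

/-- Removing the dimer `uw` is a bijection onto the configurations with two more monomers. -/
theorem card_monomers_eq_and_apply_eq {N : ℕ} {B : Finset (Fin N)} {u w : Fin N}
    (hu : u ∉ B) (hw : w ∉ B) (huw : w ≠ u) :
    (univ.filter fun D : Dimer N => monomers D = B ∧ D.1 u = w).card =
      (univ.filter fun D : Dimer N => monomers D = insert u (insert w B)).card := by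
  have key : ∀ D : Dimer N, D.1 u = w → D.1 w = u := fun D h => by rw [← h, D.2]
  have inj : ∀ (D : Dimer N) (i j : Fin N), D.1 i = j ↔ D.1 j = i := fun D i j =>
    ⟨fun h => by rw [← h, D.2], fun h => by rw [← h, D.2]⟩
  refine Finset.card_bij'
    (fun D hD => ⟨fun i => if i = u ∨ i = w then i else D.1 i, fun i => ?_⟩)
    (fun D hD => ⟨fun i => if i = u then w else if i = w then u else D.1 i, fun i => ?_⟩)
    ?_ ?_ ?_ ?_
  · simp only [mem_filter, mem_univ, true_and] at hD
    have h1 := hD.2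
    have h2 := key D h1
    have h3 := inj D i u
    have h4 := inj D i w
    have h5 := D.2 i
    grind
  · simp only [mem_filter, mem_univ, true_and] at hD
    have h1 : D.1 u = u := mem_monomers.1 (by rw [hD]; simp)
    have h2 : D.1 w = w := mem_monomers.1 (by rw [hD]; simp)
    have h3 := inj D i u
    have h4 := inj D i w
    have h5 := D.2 i
    grind
  · intro D hD
    simp only [mem_filter, mem_univ, true_and] at hD ⊢
    ext i
    have h1 : i ∈ B ↔ D.1 i = i := by rw [← hD.1, mem_monomers]
    simp only [mem_monomers, mem_insert, h1]
    grind
  · intro D hD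
    simp only [mem_filter, mem_univ, true_and] at hD ⊢
    refine ⟨?_, by simp⟩
    ext i
    have h1 : D.1 i = i ↔ i = u ∨ i = w ∨ i ∈ B := by rw [← mem_monomers, hD]; simp
    simp only [mem_monomers]
    grind
  · intro D hD
    simp only [mem_filter, mem_univ, true_and] at hD
    have h1 := hD.2
    have h2 := key D h1
    ext i
    simp only
    grind
  · intro D hD
    simp only [mem_filter, mem_univ, true_and] at hD
    have h1 : D.1 u = u := mem_monomers.1 (by rw [hD]; simp)
    have h2 : D.1 w = w := mem_monomers.1 (by rw [hD]; simp)
    ext i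
    simp only
    grind

theorem card_monomers_eq {N : ℕ} (n : ℕ) (B : Finset (Fin N)) (hB : Bᶜ.card = n) :
    (univ.filter fun D : Dimer N => monomers D = B).card = matchingCount n := by
  induction n using Nat.twoStepInduction generalizing B with
  | zero =>
    have hB' : B = univ := by simpa using hB
    subst hB'
    rw [matchingCount, Finset.card_eq_one]
    refine ⟨⟨id, fun _ => rfl⟩, ?_⟩
    ext D
    simp only [mem_filter, mem_univ, true_and, mem_singleton, Finset.eq_univ_iff_forall,
      mem_monomers, Subtype.ext_iff, funext_iff, id]
  | one =>
    obtain ⟨u, hu⟩ := Finset.card_eq_one.1 hB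
    rw [matchingCount, Finset.card_eq_zero, Finset.filter_eq_empty_iff]
    rintro D - hD
    have hmem : ∀ i, ¬ D.1 i = i ↔ i = u := fun i => by
      rw [← mem_monomers, hD, ← mem_compl, hu, mem_singleton]
    have h1 := (hmem u).2 rfl
    have h2 := (hmem (D.1 u)).1 (by rw [D.2]; exact Ne.symm h1)
    exact h1 h2
  | more n ih _ =>
    obtain ⟨u, hu⟩ : Bᶜ.Nonempty := by rw [← Finset.card_pos]; omega
    have hu' : u ∉ B := by simpa using hu
    have hmaps : ∀ D ∈ univ.filter (fun D : Dimer N => monomers D = B),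
        D.1 u ∈ Bᶜ.erase u := by
      intro D hD
      simp only [mem_filter, mem_univ, true_and] at hD
      have h1 : D.1 u ≠ u := fun h => hu' (by rw [← hD]; exact mem_monomers.2 h)
      refine mem_erase.2 ⟨h1, ?_⟩
      rw [mem_compl, ← hD, mem_monomers, D.2]
      exact Ne.symm h1
    rw [Finset.card_eq_sum_card_fiberwise hmaps]
    have hfib : ∀ w ∈ Bᶜ.erase u,
        ((univ.filter (fun D : Dimer N => monomers D = B)).filter fun D => D.1 u = w).card
          = matchingCount n := by
      intro w hw
      obtain ⟨hwu, hwB⟩ := mem_erase.1 hw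
      rw [Finset.filter_filter, card_monomers_eq_and_apply_eq hu' (by simpa using hwB) hwu]
      apply ih
      rw [Finset.compl_insert, Finset.compl_insert, Finset.card_erase_of_mem,
        Finset.card_erase_of_mem hwB, hB]
      · omega
      · exact mem_erase.2 ⟨Ne.symm hwu, hu⟩
    rw [Finset.sum_congr rfl hfib, Finset.sum_const, Finset.card_erase_of_mem hu, hB]
    simp [matchingCount]

theorem Dcount_eq {N : ℕ} (σ : Config N) : Dcount N σ = matchingCount (N - Msum σ) :=
  card_monomers_eq _ _ (by rw [Finset.card_compl, Fintype.card_fin, Msum])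

theorem Msum_le {N : ℕ} (σ : Config N) : Msum σ ≤ N := by
  simpa [Msum] using Finset.card_le_univ (ASet σ)

theorem Msum_eq_sum {N : ℕ} (σ : Config N) : Msum σ = ∑ i, (σ i).toNat := by
  rw [Msum, ASet, Finset.card_filter]
  exact Finset.sum_congr rfl fun i _ => by cases σ i <;> rfl

theorem Msum_update {N : ℕ} (σ : Config N) (u : Fin N) (s : Bool) :
    Msum (Function.update σ u s) + (σ u).toNat = Msum σ + s.toNat := by
  rw [Msum_eq_sum, Msum_eq_sum, ← Finset.add_sum_erase _ _ (mem_univ u),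
    ← Finset.add_sum_erase _ (fun i => (σ i).toNat) (mem_univ u)]
  have : ∑ i ∈ univ.erase u, (Function.update σ u s i).toNat
      = ∑ i ∈ univ.erase u, (σ i).toNat :=
    Finset.sum_congr rfl fun i hi => by rw [Function.update_of_ne (ne_of_mem_erase hi)]
  rw [this, Function.update_self]
  omega

theorem Msum_upd {N : ℕ} (σ : Config N) {u v : Fin N} (huv : u ≠ v) (s t : Bool) :
    Msum (upd σ u v s t) + (σ u).toNat + (σ v).toNat = Msum σ + s.toNat + t.toNat := by
  have h : upd σ u v s t = Function.update (Function.update σ v t) u s := by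
    ext i
    simp [upd, Function.update_apply]
  have h1 := Msum_update (Function.update σ v t) u s
  rw [Function.update_of_ne huv] at h1
  have h2 := Msum_update σ v t
  rw [h]
  omega

theorem two_mul_card_pairs_lt {N : ℕ} (A : Finset (Fin N)) :
    2 * (((cEdges N).filter fun p => p.1 ∈ A ∧ p.2 ∈ A).card : ℝ)
      = (A.card : ℝ) * ((A.card : ℝ) - 1) := by
  set S := (cEdges N).filter fun p => p.1 ∈ A ∧ p.2 ∈ A with hS
  have hoff : A.offDiag = S ∪ S.map (Equiv.prodComm _ _).toEmbedding := by
    ext ⟨i, j⟩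
    simp only [mem_offDiag, hS, cEdges, mem_union, mem_map_equiv, mem_filter, mem_univ, true_and,
      Equiv.prodComm_symm, Equiv.prodComm_apply, Prod.swap_prod_mk]
    grind
  have hdisj : Disjoint S (S.map (Equiv.prodComm _ _).toEmbedding) := by
    rw [Finset.disjoint_left]
    rintro ⟨i, j⟩
    simp only [hS, cEdges, mem_map_equiv, mem_filter, mem_univ, true_and,
      Equiv.prodComm_symm, Equiv.prodComm_apply, Prod.swap_prod_mk]
    grind
  have h := congrArg Finset.card hoff
  rw [Finset.card_union_of_disjoint hdisj, Finset.card_map, Finset.offDiag_card] at h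
  have hle : A.card ≤ A.card * A.card := Nat.le_mul_self _
  have h' : A.card * A.card = 2 * S.card + A.card := by omega
  have h'' : (A.card : ℝ) * A.card = 2 * S.card + A.card := by exact_mod_cast h'
  linarith

theorem two_mul_card_cEdges (N : ℕ) : 2 * ((cEdges N).card : ℝ) = N * ((N : ℝ) - 1) := by
  simpa using two_mul_card_pairs_lt (univ : Finset (Fin N))

end Counting

noncomputable section

/-- The weight of a configuration with `k` up-spins. -/
def levelWeight (N : ℕ) (J h : ℝ) (k : ℕ) : ℝ :=
  (matchingCount (N - k) : ℝ) * Real.exp (N * (J * ((k : ℝ) / N) ^ 2 + bIMD N J h * ((k : ℝ) / N)))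

theorem wConf_eq_levelWeight (N : ℕ) (J h : ℝ) (σ : Config N) :
    wConf N J h σ = levelWeight N J h (Msum σ) := by
  rw [wConf, Dcount_eq, levelWeight, mConf]

theorem levelWeight_eq_zero {N : ℕ} {J h : ℝ} {k : ℕ} (hk : Odd (N - k)) :
    levelWeight N J h k = 0 := by
  simp [levelWeight, matchingCount_eq_zero_of_odd hk]

theorem levelWeight_pos {N : ℕ} {J h : ℝ} {k : ℕ} (hk : Even (N - k)) :
    0 < levelWeight N J h k :=
  mul_pos (by exact_mod_cast matchingCount_pos_of_even hk) (Real.exp_pos _)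

theorem even_of_wConf_ne_zero {N : ℕ} {J h : ℝ} {σ : Config N} (hσ : wConf N J h σ ≠ 0) :
    Even (N - Msum σ) := by
  by_contra hodd
  exact hσ (by rw [wConf_eq_levelWeight, levelWeight_eq_zero (Nat.not_even_iff_odd.1 hodd)])

/-- Moving two vertices from monomers to a dimer multiplies the weight by
`(N - k - 1) / (N e^{2τ} e^{4J/N})`, where `τ` is evaluated at the smaller density `k/N`. -/
theorem levelWeight_add_two {N : ℕ} (hN : 1 ≤ N) (J h : ℝ) {k : ℕ} (hk : k + 2 ≤ N) :
    levelWeight N J h k * (Real.exp (2 * tauFun J h ((k : ℝ) / N)) * Real.exp (4 * J / N))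
      = levelWeight N J h (k + 2) * (((N : ℝ) - k - 1) / N) := by
  have hN0 : (0 : ℝ) < N := by exact_mod_cast hN
  obtain ⟨n, rfl⟩ := Nat.exists_eq_add_of_le hk
  have e1 : k + 2 + n - k = n + 2 := by omega
  have e2 : k + 2 + n - (k + 2) = n := by omega
  rw [levelWeight, levelWeight, e1, e2, matchingCount]
  set L : ℝ := ((k + 2 + n : ℕ) : ℝ) with hL
  have hLn : L - k - 1 = n + 1 := by rw [hL]; push_cast; ring
  have hexp : Real.exp (L * (J * (((k + 2 : ℕ) : ℝ) / L) ^ 2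
        + bIMD (k + 2 + n) J h * (((k + 2 : ℕ) : ℝ) / L)))
      = Real.exp (L * (J * ((k : ℝ) / L) ^ 2 + bIMD (k + 2 + n) J h * ((k : ℝ) / L)))
        * (Real.exp (2 * tauFun J h ((k : ℝ) / L)) * Real.exp (4 * J / L)) * L := by
    conv_rhs => rw [← Real.exp_log hN0]
    rw [← Real.exp_add, ← Real.exp_add, ← Real.exp_add, Real.exp_log hN0]
    congr 1
    rw [bIMD, tauFun, ← hL]
    push_cast
    field_simp
    ring
  rw [hexp, hLn]
  push_cast
  field_simp

/-- The transition factor `e^{4J/N}` differs from `1` by at most `4J e^{4J} / N`. -/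
theorem exp_div_sub_one_le {J : ℝ} (hJ : 0 ≤ J) {N : ℕ} (hN : 1 ≤ N) :
    Real.exp (4 * J / N) - 1 ≤ 4 * J * Real.exp (4 * J) * (1 / N) := by
  have hN1 : (1 : ℝ) ≤ N := by exact_mod_cast hN
  have h4J : 0 ≤ 4 * J := by positivity
  have hle : 4 * J / N ≤ 4 * J := div_le_self h4J hN1
  have h0 : 0 ≤ 4 * J / N := by positivity
  have h1 : Real.exp (4 * J / N) - 1 ≤ 4 * J / N * Real.exp (4 * J / N) := by
    have h2 := Real.add_one_le_exp (-(4 * J / N))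
    have h3 : Real.exp (-(4 * J / N)) * Real.exp (4 * J / N) = 1 := by
      rw [← Real.exp_add]; simp
    nlinarith [Real.exp_pos (4 * J / N)]
  calc Real.exp (4 * J / N) - 1 ≤ 4 * J / N * Real.exp (4 * J / N) := h1
    _ ≤ 4 * J / N * Real.exp (4 * J) := by gcongr
    _ = 4 * J * Real.exp (4 * J) * (1 / N) := by ring

/-- The exact second conditional moment as a function of the magnetization `m`. -/
def secondMoment (N : ℕ) (J h m : ℝ) : ℝ :=
  4 * (N * m * (N * m - 1) / (N * (N - 1))
      * ((1 - m + 1 / N) * Real.exp (4 * J / N)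
        / ((1 - m + 1 / N) * Real.exp (4 * J / N) + Real.exp (2 * tauFun J h m))))
    + 4 * (N * (1 - m) * (N * (1 - m) - 1) / (N * (N - 1))
      * (Real.exp (2 * tauFun J h m) * Real.exp (4 * J / N)
        / (max (1 - m - 1 / N) 0 + Real.exp (2 * tauFun J h m) * Real.exp (4 * J / N))))

theorem abs_falling_sub_sq_le {N : ℕ} (hN : 2 ≤ N) {m : ℝ} (hm : m ∈ Set.Icc (0 : ℝ) 1) :
    |N * m * (N * m - 1) / (N * ((N : ℝ) - 1)) - m ^ 2| ≤ 1 / (N : ℝ) := by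
  obtain ⟨h0, h1⟩ := hm
  have hN2 : (2 : ℝ) ≤ N := by exact_mod_cast hN
  have hN1 : (0 : ℝ) < (N : ℝ) - 1 := by linarith
  have e : N * m * (N * m - 1) / (N * ((N : ℝ) - 1)) - m ^ 2 = -(m * (1 - m) / ((N : ℝ) - 1)) := by
    field_simp
    ring
  have hnn : 0 ≤ m * (1 - m) := mul_nonneg h0 (by linarith)
  rw [e, abs_neg, abs_of_nonneg (div_nonneg hnn hN1.le), div_le_div_iff₀ hN1 (by linarith)]
  nlinarith [sq_nonneg (2 * m - 1)]

theorem abs_mul_sub_mul_le {a b p q δ η : ℝ} (hab : |a - b| ≤ δ) (hpq : |p - q| ≤ η)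
    (hp0 : 0 ≤ p) (hp1 : p ≤ 1) (hb0 : 0 ≤ b) (hb1 : b ≤ 1) : |a * p - b * q| ≤ δ + η := by
  have e : a * p - b * q = (a - b) * p + b * (p - q) := by ring
  rw [e]
  refine (abs_add_le _ _).trans ?_
  rw [abs_mul, abs_mul, abs_of_nonneg hp0, abs_of_nonneg hb0]
  exact add_le_add ((mul_le_of_le_one_right (abs_nonneg _) hp1).trans hab)
    ((mul_le_of_le_one_left (abs_nonneg _) hb1).trans hpq)

theorem abs_div_add_sub_div_add_le {x y c E : ℝ} (hx : 0 ≤ x) (hy : 0 ≤ y) (hc : 0 < c)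
    (hcE : c ≤ E) : |y / (y + E) - x / (x + E)| ≤ |y - x| / c := by
  have hE : 0 < E := hc.trans_le hcE
  have e : y / (y + E) - x / (x + E) = (y - x) * (E / ((y + E) * (x + E))) := by
    field_simp
    ring
  have hfac : E / ((y + E) * (x + E)) ≤ 1 / c := by
    rw [div_le_div_iff₀ (by positivity) hc]
    nlinarith [mul_nonneg hy hx, mul_nonneg hy hE.le, mul_nonneg hx hE.le]
  rw [e, abs_mul, abs_of_nonneg (by positivity : 0 ≤ E / ((y + E) * (x + E))),
    div_eq_mul_one_div |y - x| c]
  exact mul_le_mul_of_nonneg_left hfac (abs_nonneg _)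

theorem abs_div_sub_div_le_of_scaled {x z c E r : ℝ} (hx : 0 ≤ x) (hz : 0 ≤ z) (hc : 0 < c)
    (hcE : c ≤ E) (hr : 1 ≤ r) :
    |E * r / (z + E * r) - E / (x + E)| ≤ |r * x - z| / c := by
  have hE : 0 < E := hc.trans_le hcE
  have hr0 : 0 < r := by linarith
  have e : E * r / (z + E * r) - E / (x + E) = (r * x - z) * (E / ((z + E * r) * (x + E))) := by
    field_simp
    ring
  have hfac : E / ((z + E * r) * (x + E)) ≤ 1 / c := by
    rw [div_le_div_iff₀ (by positivity) hc]
    have h1 : E ≤ z + E * r := by nlinarith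
    have h2 : c ≤ x + E := by linarith
    nlinarith [mul_le_mul h1 h2 hc.le (by positivity)]
  rw [e, abs_mul, abs_of_nonneg (by positivity : 0 ≤ E / ((z + E * r) * (x + E))),
    div_eq_mul_one_div |r * x - z| c]
  exact mul_le_mul_of_nonneg_left hfac (abs_nonneg _)

theorem abs_Ltwo_le {J h m : ℝ} (hm : m ∈ Set.Icc (0 : ℝ) 1) : |Ltwo J h m| ≤ 4 := by
  obtain ⟨h0, h1⟩ := hm
  have hE := Real.exp_pos (2 * tauFun J h m)
  rw [Ltwo]
  generalize Real.exp (2 * tauFun J h m) = E at *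
  have hx : 0 ≤ 1 - m := by linarith
  have hD : 0 < 1 - m + E := by linarith
  rw [abs_of_nonneg (by positivity), div_le_iff₀ hD]
  have h2 : m ^ 2 ≤ 1 := by nlinarith
  have h3 : (1 - m) ^ 2 ≤ 1 := by nlinarith
  nlinarith [mul_le_mul_of_nonneg_left h2 hx, mul_le_mul_of_nonneg_left h3 hE.le]

theorem abs_secondMoment_sub_Ltwo_le {J h : ℝ} (hJ : 0 ≤ J) {N : ℕ} (hN : 1 ≤ N) {m : ℝ}
    (hm : m ∈ Set.Icc (0 : ℝ) 1) :
    |secondMoment N J h m - Ltwo J h m| ≤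
      (8 + 8 * ((4 * J + 1) * Real.exp (4 * J) / Real.exp (2 * (h - J)))) / N := by
  have hconst : 0 ≤ 8 * ((4 * J + 1) * Real.exp (4 * J) / Real.exp (2 * (h - J))) := by positivity
  rcases hN.eq_or_lt with rfl | hN2
  · have := abs_Ltwo_le (J := J) (h := h) hm
    simp only [secondMoment, Nat.cast_one, sub_self, mul_zero, div_zero, zero_mul, add_zero,
      zero_sub, abs_neg, div_one]
    linarith
  have hm' : 1 - m ∈ Set.Icc (0 : ℝ) 1 := ⟨by linarith [hm.2], by linarith [hm.1]⟩
  have hA := abs_falling_sub_sq_le hN2 hm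
  have hB := abs_falling_sub_sq_le hN2 hm'
  have hN0 : (0 : ℝ) < N := by exact_mod_cast hN
  have hr1 : 1 ≤ Real.exp (4 * J / N) := Real.one_le_exp (by positivity)
  have hrle : Real.exp (4 * J / N) ≤ Real.exp (4 * J) :=
    Real.exp_le_exp.2 (div_le_self (by positivity) (by exact_mod_cast hN))
  have hr := exp_div_sub_one_le hJ hN
  have hcE : Real.exp (2 * (h - J)) ≤ Real.exp (2 * tauFun J h m) := by
    apply Real.exp_le_exp.2
    rw [tauFun]
    nlinarith [hm.1]
  have hc := Real.exp_pos (2 * (h - J))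
  have hQ : 1 ≤ Real.exp (4 * J) := Real.one_le_exp (by positivity)
  rw [secondMoment, Ltwo]
  generalize N * m * (N * m - 1) / (N * ((N : ℝ) - 1)) = a at *
  generalize N * (1 - m) * (N * (1 - m) - 1) / (N * ((N : ℝ) - 1)) = b at *
  generalize Real.exp (4 * J / N) = r at *
  generalize Real.exp (2 * tauFun J h m) = E at *
  generalize Real.exp (2 * (h - J)) = c at *
  generalize Real.exp (4 * J) = Q at *
  have hm2 : m ^ 2 ≤ 1 := by nlinarith [hm.1, hm.2]
  have hx2 : (1 - m) ^ 2 ≤ 1 := by nlinarith [hm.1, hm.2]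
  obtain ⟨hx0, hx1⟩ := hm'
  generalize 1 - m = x at *
  have hε : 0 < 1 / (N : ℝ) := by positivity
  rw [div_eq_mul_one_div (8 + _) (N : ℝ)]
  generalize 1 / (N : ℝ) = ε at *
  have hE : 0 < E := hc.trans_le hcE
  have hr0 : 0 < r := by linarith
  set y := (x + ε) * r with hy
  set z := max (x - ε) 0 with hz
  have hy0 : 0 ≤ y := by positivity
  have hz0 : 0 ≤ z := le_max_right _ _
  have hzx : z ≤ x := max_le (by linarith) hx0
  have hxz : x - ε ≤ z := le_max_left _ _
  have hrx : x * (r - 1) ≤ 4 * J * Q * ε :=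
    (mul_le_of_le_one_left (by linarith) hx1).trans hr
  have hrx0 : 0 ≤ x * (r - 1) := mul_nonneg hx0 (by linarith)
  have hyx : |y - x| ≤ (4 * J + 1) * Q * ε := by
    have e : y - x = x * (r - 1) + r * ε := by rw [hy]; ring
    rw [e, abs_of_nonneg (by positivity)]
    nlinarith [mul_le_mul_of_nonneg_right hrle hε.le]
  have hxz' : |r * x - z| ≤ (4 * J + 1) * Q * ε := by
    have e : r * x - z = x * (r - 1) + (x - z) := by ring
    rw [e, abs_of_nonneg (by linarith)]
    nlinarith [mul_le_mul_of_nonneg_right hQ hε.le]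
  have hP := (abs_div_add_sub_div_add_le hx0 hy0 hc hcE).trans
    (div_le_div_of_nonneg_right hyx hc.le)
  have hP' := (abs_div_sub_div_le_of_scaled hx0 hz0 hc hcE hr1).trans
    (div_le_div_of_nonneg_right hxz' hc.le)
  have h1 := abs_mul_sub_mul_le hA hP (by positivity)
    ((div_le_one (by positivity)).2 (by linarith)) (sq_nonneg m) hm2
  have h2 := abs_mul_sub_mul_le hB hP' (by positivity)
    ((div_le_one (by positivity)).2 (by linarith)) (sq_nonneg x) hx2
  have e : 4 * (a * (y / (y + E))) + 4 * (b * (E * r / (z + E * r)))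
        - 4 * x * (m ^ 2 + x * E) / (x + E)
      = 4 * (a * (y / (y + E)) - m ^ 2 * (x / (x + E)))
        + 4 * (b * (E * r / (z + E * r)) - x ^ 2 * (E / (x + E))) := by
    ring
  have e' : (8 + 8 * ((4 * J + 1) * Q / c)) * ε
      = 4 * (ε + (4 * J + 1) * Q * ε / c) + 4 * (ε + (4 * J + 1) * Q * ε / c) := by
    ring
  rw [e, e']
  refine (abs_add_le _ _).trans ?_
  rw [abs_mul, abs_mul, abs_of_nonneg (by norm_num : (0 : ℝ) ≤ 4)]
  gcongr

/-- The conditional second moment of the resampling step at a fixed edge `uv`. -/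
theorem sum_qCond_mul_sq {N : ℕ} {J h : ℝ} {σ : Config N} (hσ : wConf N J h σ ≠ 0)
    {u v : Fin N} (huv : u ≠ v) :
    ∑ st : Bool × Bool, qCond N J h σ u v st.1 st.2
        * ((Msum σ : ℝ) - (Msum (upd σ u v st.1 st.2) : ℝ)) ^ 2
      = (if u ∈ ASet σ ∧ v ∈ ASet σ then
          4 * (levelWeight N J h (Msum σ - 2)
            / (levelWeight N J h (Msum σ) + levelWeight N J h (Msum σ - 2))) else 0)
        + (if u ∈ (ASet σ)ᶜ ∧ v ∈ (ASet σ)ᶜ then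
          4 * (levelWeight N J h (Msum σ + 2)
            / (levelWeight N J h (Msum σ) + levelWeight N J h (Msum σ + 2))) else 0) := by
  have heven := even_of_wConf_ne_zero hσ
  have hle := Msum_le σ
  have htt := Msum_upd σ huv true true
  have htf := Msum_upd σ huv true false
  have hft := Msum_upd σ huv false true
  have hff := Msum_upd σ huv false false
  have ltt := Msum_le (upd σ u v true true)
  have ltf := Msum_le (upd σ u v true false)
  have lft := Msum_le (upd σ u v false true)
  have lff := Msum_le (upd σ u v false false)
  simp only [Fintype.sum_prod_type, Fintype.sum_bool, qCond, wConf_eq_levelWeight, ASet,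
    mem_compl, mem_filter, mem_univ, true_and]
  generalize Msum (upd σ u v true true) = ktt at *
  generalize Msum (upd σ u v true false) = ktf at *
  generalize Msum (upd σ u v false true) = kft at *
  generalize Msum (upd σ u v false false) = kff at *
  generalize Msum σ = M at *
  rcases hu : σ u <;> rcases hv : σ v <;>
    simp only [hu, hv, Bool.toNat_true, Bool.toNat_false, add_zero] at htt htf hft hff
  · have wtf : levelWeight N J h ktf = 0 := levelWeight_eq_zero (by grind)
    have wft : levelWeight N J h kft = 0 := levelWeight_eq_zero (by grind)
    obtain rfl : kff = M := hff
    obtain rfl : ktt = kff + 2 := htt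
    simp [wtf, wft]
    ring
  · have wtt : levelWeight N J h ktt = 0 := levelWeight_eq_zero (by grind)
    have wff : levelWeight N J h kff = 0 := levelWeight_eq_zero (by grind)
    obtain rfl : ktf = M := by omega
    obtain rfl : kft = ktf := by omega
    simp [wtt, wff]
  · have wtt : levelWeight N J h ktt = 0 := levelWeight_eq_zero (by grind)
    have wff : levelWeight N J h kff = 0 := levelWeight_eq_zero (by grind)
    obtain rfl : ktf = M := by omega
    obtain rfl : kft = ktf := by omega
    simp [wtt, wff]
  · have wtf : levelWeight N J h ktf = 0 := levelWeight_eq_zero (by grind)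
    have wft : levelWeight N J h kft = 0 := levelWeight_eq_zero (by grind)
    obtain rfl : M = kff + 2 := by omega
    obtain rfl : ktt = kff + 2 := by omega
    simp [wtf, wft]
    ring

theorem condE2_eq_levelWeight {N : ℕ} {J h : ℝ} {σ : Config N} (hσ : wConf N J h σ ≠ 0) :
    condE2 N J h (fun σ σ' => ((Msum σ : ℝ) - (Msum σ' : ℝ)) ^ 2) σ
      = 4 * ((Msum σ : ℝ) * (Msum σ - 1) / (N * (N - 1))
          * (levelWeight N J h (Msum σ - 2)
            / (levelWeight N J h (Msum σ) + levelWeight N J h (Msum σ - 2))))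
        + 4 * (((N : ℝ) - Msum σ) * (N - Msum σ - 1) / (N * (N - 1))
          * (levelWeight N J h (Msum σ + 2)
            / (levelWeight N J h (Msum σ) + levelWeight N J h (Msum σ + 2)))) := by
  have hsum : ∀ p ∈ cEdges N, _ := fun p hp =>
    sum_qCond_mul_sq hσ (u := p.1) (v := p.2) (ne_of_lt (by simpa [cEdges] using hp))
  have h1 := two_mul_card_pairs_lt (ASet σ)
  have h2 := two_mul_card_pairs_lt (ASet σ)ᶜ
  have h3 : (((ASet σ)ᶜ.card : ℕ) : ℝ) = N - Msum σ := by
    rw [Finset.card_compl, Fintype.card_fin, ← Msum, Nat.cast_sub (Msum_le σ)]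
  rw [h3] at h2
  have h4 := two_mul_card_cEdges N
  rw [condE2, Finset.sum_congr rfl hsum, Finset.sum_add_distrib, ← Finset.sum_filter,
    ← Finset.sum_filter, Finset.sum_const, Finset.sum_const, nsmul_eq_mul, nsmul_eq_mul,
    ← h4, ← h2]
  change 2 * _ = (Msum σ : ℝ) * ((Msum σ : ℝ) - 1) at h1
  rw [← h1, mul_div_mul_left _ _ two_ne_zero, mul_div_mul_left _ _ two_ne_zero]
  ring

theorem condE2_eq_secondMoment {N : ℕ} (hN : 1 ≤ N) {J h : ℝ} {σ : Config N}
    (hσ : wConf N J h σ ≠ 0) :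
    condE2 N J h (fun σ σ' => ((Msum σ : ℝ) - (Msum σ' : ℝ)) ^ 2) σ
      = secondMoment N J h (mConf σ) := by
  have heven := even_of_wConf_ne_zero hσ
  have hle := Msum_le σ
  have hN0 : (0 : ℝ) < N := by exact_mod_cast hN
  have hw := levelWeight_pos (J := J) (h := h) heven
  rw [condE2_eq_levelWeight hσ, secondMoment, mConf]
  generalize Msum σ = M at *
  have e1 : (N : ℝ) * (M / N) = M := by field_simp
  have e2 : (N : ℝ) * (1 - M / N) = N - M := by field_simp
  rw [e1, e2]
  have hr := Real.exp_pos (4 * J / N)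
  have hE := Real.exp_pos (2 * tauFun J h ((M : ℝ) / N))
  congr 2
  · rcases lt_or_ge M 2 with hM | hM
    · interval_cases M <;> simp
    obtain ⟨k, rfl⟩ := Nat.exists_eq_add_of_le' hM
    rw [Nat.add_sub_cancel]
    congr 1
    have hstep := levelWeight_add_two hN J h hle
    have hw' := levelWeight_pos (N := N) (J := J) (h := h) (k := k) (by grind)
    have htau : Real.exp (2 * tauFun J h (((k + 2 : ℕ) : ℝ) / N))
        = Real.exp (2 * tauFun J h ((k : ℝ) / N)) * Real.exp (4 * J / N)
          * Real.exp (4 * J / N) := by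
      rw [← Real.exp_add, ← Real.exp_add, tauFun, tauFun]
      congr 1
      push_cast
      field_simp
      ring
    have hk : (k : ℝ) + 2 ≤ N := by exact_mod_cast hle
    have hy : 1 - ((k + 2 : ℕ) : ℝ) / N + 1 / N = ((N : ℝ) - k - 1) / N := by
      push_cast
      field_simp
      ring
    have hypos : 0 < ((N : ℝ) - k - 1) / N := div_pos (by linarith) hN0
    rw [hy]
    rw [htau] at hE ⊢
    rw [div_eq_div_iff (by positivity) (by positivity)]
    linear_combination (Real.exp (4 * J / N)) * hstep
  · rcases lt_or_ge (N - M) 2 with hM | hM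
    · have h0 : N - M = 0 := by
        interval_cases hNM : N - M
        · rfl
        · simp at heven
      obtain rfl : M = N := by omega
      simp
    have hle2 : M + 2 ≤ N := by omega
    congr 1
    have hstep := levelWeight_add_two hN J h hle2
    have hw' := levelWeight_pos (N := N) (J := J) (h := h) (k := M + 2) (by grind)
    have hk : (M : ℝ) + 2 ≤ N := by exact_mod_cast hle2
    have hz : 1 - (M : ℝ) / N - 1 / N = ((N : ℝ) - M - 1) / N := by
      field_simp
    have hzpos : 0 < ((N : ℝ) - M - 1) / N := div_pos (by linarith) hN0
    rw [hz, max_eq_left hzpos.le]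
    rw [div_eq_div_iff (by positivity) (by positivity)]
    linear_combination (-1 : ℝ) * hstep

end

/-- Second conditional moment of the exchangeable pair for the weighted
Curie–Weiss model: `E[(M - M')² | σ] = L₂(m(σ)) + R₂(m(σ))` with `|R₂(m)| ≤ K/N` on
`[0,1]`, for a constant `K = K(J,h)` independent of `N`. -/
theorem stmt6 (J h : ℝ) (hJ : 0 ≤ J) :
    ∃ K : ℝ, ∀ N : ℕ, 1 ≤ N →
      ∃ R₂ : ℝ → ℝ,
        (∀ m ∈ Set.Icc (0:ℝ) 1, |R₂ m| ≤ K / N) ∧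
        ∀ σ : Config N, wConf N J h σ ≠ 0 →
          condE2 N J h (fun σ σ' => ((Msum σ : ℝ) - (Msum σ' : ℝ))^2) σ
            = Ltwo J h (mConf σ) + R₂ (mConf σ) := by
  refine ⟨8 + 8 * ((4 * J + 1) * Real.exp (4 * J) / Real.exp (2 * (h - J))), fun N hN =>
    ⟨fun m => secondMoment N J h m - Ltwo J h m,
      fun m hm => abs_secondMoment_sub_Ltwo_le hJ hN hm, fun σ hσ => ?_⟩⟩
  rw [condE2_eq_secondMoment hN hσ, add_sub_cancel]
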